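/- Let G be a group and A ⊆ G a nonempty finite set. The following are equivalent: (i) VC^ℓ_A(A) = 0; (ii) VC^r_A(A) = 0; (iii) |AA| = |A|; (iv) A is a coset aH of a subgroup H ≤ G satisfying aH = Ha. -/

import Mathlib

open scoped Pointwise symmDiff

/-- `Stab^ℓ_N(A) = {x : |xA △ A| ≤ N}`. -/
def stabL {G : Type*} [Group G] (A : Set G) (N : ℝ) : Set G :=
  {x : G | (((x • A) ∆ A).ncard : ℝ) ≤ N}

/-- `Stab^r_N(A) = {x : |Ax △ A| ≤ N}`. -/
def stabR {G : Type*} [Group G] (A : Set G) (N : ℝ) : Set G :=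
  {x : G | (((A * {x}) ∆ A).ncard : ℝ) ≤ N}

/-- `St^ℓ_ε(A) = Stab^ℓ_{ε|A|}(A)`. -/
def stL {G : Type*} [Group G] (A : Set G) (ε : ℝ) : Set G := stabL A (ε * A.ncard)

/-- `St^r_ε(A) = Stab^r_{ε|A|}(A)`. -/
def stR {G : Type*} [Group G] (A : Set G) (ε : ℝ) : Set G := stabR A (ε * A.ncard)

/-- A family of sets shatters `S` if every subset of `S` is cut out by a member of the family. -/
def Shatters {α : Type*} (F : Set (Set α)) (S : Set α) : Prop :=
  ∀ T ⊆ S, ∃ f ∈ F, S ∩ f = T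

/-- VC-dimension of a set system: the supremum of cardinalities of finite shattered sets. -/
noncomputable def vcDim {α : Type*} (F : Set (Set α)) : ℕ∞ :=
  ⨆ (S : Finset α) (_ : Shatters F ↑S), (S.card : ℕ∞)

/-- The family of left translates `{xA : x ∈ B}`. -/
def leftFam {G : Type*} [Group G] (A B : Set G) : Set (Set G) := (fun x => x • A) '' B

/-- The family of right translates `{Ax : x ∈ B}`. -/
def rightFam {G : Type*} [Group G] (A B : Set G) : Set (Set G) := (fun x => A * {x}) '' B

/-- `Z^ℓ_ε(A,X) = {g : min(|gX ∩ A|, |gX \ A|) ≥ ε|X|}`. -/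
def Zl {G : Type*} [Group G] (A X : Set G) (ε : ℝ) : Set G :=
  {g : G | ε * X.ncard ≤ min (((g • X) ∩ A).ncard : ℝ) (((g • X) \ A).ncard : ℝ)}

/-!
A family of sets has VC-dimension zero exactly when it has at most one member, and a nonempty
family of sets of common size `n` with finite union has one member exactly when its union has
size `n`. Both the left translates `xA` and the right translates `Ax`, for `x ∈ A`, have union `AA`
and members of size `|A|`, so either family has VC-dimension zero exactly when `|AA| = |A|`. A
nonempty finite set without doubling is a coset `aH = Ha` of its stabilizer `H`; conversely
`(aH)(Ha) = (aH)a` has the size of `aH`.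
-/

section VCDimension

variable {α : Type*} {F : Set (Set α)}

theorem shatters_singleton_iff {x : α} :
    Shatters F {x} ↔ (∃ f ∈ F, x ∈ f) ∧ ∃ f ∈ F, x ∉ f := by
  simp only [Shatters, Set.subset_singleton_iff_eq, forall_eq_or_imp, forall_eq,
    Set.singleton_inter_eq_empty, Set.inter_eq_left, Set.singleton_subset_iff, and_comm]

theorem Shatters.eq_empty_of_subsingleton {S : Set α} (hS : Shatters F S)
    (hF : F.Subsingleton) : S = ∅ := by
  obtain ⟨f, hf, hfS⟩ := hS ∅ (Set.empty_subset S)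
  obtain ⟨g, hg, hgS⟩ := hS S subset_rfl
  rw [← hgS, hF hg hf, hfS]

theorem vcDim_eq_zero_iff_subsingleton : vcDim F = 0 ↔ F.Subsingleton := by
  simp only [vcDim, ENat.iSup_eq_zero, Nat.cast_eq_zero, Finset.card_eq_zero]
  refine ⟨fun h => ?_, fun hF S hS => by exact_mod_cast hS.eq_empty_of_subsingleton hF⟩
  have subset_of_mem : ∀ f ∈ F, ∀ g ∈ F, f ⊆ g := by
    intro f hf g hg x hxf
    by_contra hxg
    have hx : Shatters F {x} := shatters_singleton_iff.2 ⟨⟨f, hf, hxf⟩, g, hg, hxg⟩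
    exact Finset.singleton_ne_empty x (h {x} (by simpa only [Finset.coe_singleton] using hx))
  exact fun f hf g hg => (subset_of_mem f hf g hg).antisymm (subset_of_mem g hg f hf)

theorem subsingleton_iff_ncard_sUnion_eq {n : ℕ} (hne : F.Nonempty) (hfin : (⋃₀ F).Finite)
    (hcard : ∀ f ∈ F, f.ncard = n) : F.Subsingleton ↔ (⋃₀ F).ncard = n := by
  constructor
  · intro hF
    obtain ⟨f, rfl⟩ := Set.exists_eq_singleton_iff_nonempty_subsingleton.2 ⟨hne, hF⟩
    rw [Set.sUnion_singleton, hcard f (Set.mem_singleton f)]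
  · intro hn
    have eq_sUnion : ∀ f ∈ F, f = ⋃₀ F := fun f hf =>
      Set.eq_of_subset_of_ncard_le (Set.subset_sUnion_of_mem hf) (by rw [hn, hcard f hf]) hfin
    exact fun f hf g hg => (eq_sUnion f hf).trans (eq_sUnion g hg).symm

end VCDimension

section Translates

variable {G : Type*} [Group G] {A B : Set G}

theorem ncard_mul_singleton {M : Type*} [Mul M] [IsRightCancelMul M] (A : Set M) (x : M) :
    (A * {x}).ncard = A.ncard := by
  rw [Set.mul_singleton, Set.ncard_image_of_injective A (mul_left_injective x)]

theorem sUnion_leftFam (A B : Set G) : ⋃₀ leftFam A B = B * A := by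
  rw [leftFam, Set.sUnion_image, Set.iUnion_smul_set, smul_eq_mul]

theorem sUnion_rightFam (A B : Set G) : ⋃₀ rightFam A B = A * B := by
  simp only [rightFam, Set.sUnion_image, Set.mul_singleton, Set.iUnion_mul_right_image]

theorem vcDim_leftFam_eq_zero_iff (hB : B.Nonempty) (hBA : (B * A).Finite) :
    vcDim (leftFam A B) = 0 ↔ (B * A).ncard = A.ncard := by
  rw [← sUnion_leftFam] at hBA ⊢
  rw [vcDim_eq_zero_iff_subsingleton]
  exact subsingleton_iff_ncard_sUnion_eq (hB.image _) hBA
    (Set.forall_mem_image.2 fun x _ => Set.ncard_smul_set x A)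

theorem vcDim_rightFam_eq_zero_iff (hB : B.Nonempty) (hAB : (A * B).Finite) :
    vcDim (rightFam A B) = 0 ↔ (A * B).ncard = A.ncard := by
  rw [← sUnion_rightFam] at hAB ⊢
  rw [vcDim_eq_zero_iff_subsingleton]
  exact subsingleton_iff_ncard_sUnion_eq (hB.image _) hAB
    (Set.forall_mem_image.2 fun x _ => ncard_mul_singleton A x)

end Translates

section Doubling

theorem exists_eq_coset_of_ncard_mul_self_le {G : Type*} [Group G] {A : Set G} (hA : A.Finite)
    (hAne : A.Nonempty) (hAA : (A * A).ncard ≤ A.ncard) :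
    ∃ (H : Subgroup G) (a : G),
      A = a • (H : Set G) ∧ a • (H : Set G) = (H : Set G) * {a} := by
  classical
  lift A to Finset G using hA
  obtain ⟨a, ha⟩ := hAne
  rw [← Finset.coe_mul, Set.ncard_coe_finset, Set.ncard_coe_finset] at hAA
  have left_coset : a • (MulAction.stabilizer G A : Set G) = A :=
    Finset.smul_stabilizer_of_no_doubling hAA ha
  have right_coset : (MulAction.stabilizer G A : Set G) * {a} = A := by
    rw [Set.mul_singleton]
    exact Finset.op_smul_stabilizer_of_no_doubling hAA ha
  exact ⟨MulAction.stabilizer G A, a, left_coset.symm, left_coset.trans right_coset.symm⟩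

theorem ncard_coset_mul_self {M S : Type*} [RightCancelMonoid M] [SetLike S M]
    [SubmonoidClass S M] (H : S) (a : M) (ha : a • (H : Set M) = (H : Set M) * {a}) :
    (a • (H : Set M) * a • (H : Set M)).ncard = (a • (H : Set M)).ncard := by
  have product_eq : a • (H : Set M) * a • (H : Set M) = a • (H : Set M) * {a} :=
    calc a • (H : Set M) * a • (H : Set M)
        = a • (H : Set M) * ((H : Set M) * {a}) := by rw [ha]
      _ = a • ((H : Set M) * H) * {a} := by rw [← mul_assoc, smul_mul_assoc]
      _ = a • (H : Set M) * {a} := by rw [coe_mul_coe]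
  rw [product_eq, ncard_mul_singleton]

end Doubling

/-- equivalent characterizations of `VC^•_A(A) = 0`
(Proposition 2.16(c) of the paper). -/
theorem vc_self_eq_zero_tfae {G : Type*} [Group G] (A : Set G)
    (hA : A.Finite) (hAne : A.Nonempty) :
    List.TFAE
      [vcDim (leftFam A A) = 0,
       vcDim (rightFam A A) = 0,
       (A * A).ncard = A.ncard,
       ∃ (H : Subgroup G) (a : G),
         A = a • (H : Set G) ∧ a • (H : Set G) = (H : Set G) * {a}] := by
  have hAA : (A * A).Finite := hA.mul hA
  tfae_have 1 ↔ 3 := vcDim_leftFam_eq_zero_iff hAne hAA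
  tfae_have 2 ↔ 3 := vcDim_rightFam_eq_zero_iff hAne hAA
  tfae_have 3 → 4 := fun h => exists_eq_coset_of_ncard_mul_self_le hA hAne h.le
  tfae_have 4 → 3 := by
    rintro ⟨H, a, rfl, ha⟩
    exact ncard_coset_mul_self H a ha
  tfae_finish
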